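/- Let n = 2, p ∈ [2,∞), and Ω a bounded domain with first Dirichlet Laplacian eigenvalue λ₁. Let ν be the largest integer with ν ≤ p/2, and τ ≥ 0. Then for all u ∈ H₀¹(Ω), ‖u‖_{L^p(Ω)} ≤ (1/2)^{1/2 + (2ν−3)/p} [ (p/2)(p/2 − 1)⋯(p/2 − ν + 2) ]^{2/p} (λ₁ + (p/2)τ)^{−1/p} · ‖u‖_V, where ‖u‖_V² = ‖∇u‖²_{L²} + τ‖u‖²_{L²} and the bracketed product is 1 when ν = 1. -/

import Mathlib

open MeasureTheory

noncomputable section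

/-- Rayleigh quotients of nontrivial smooth test functions compactly supported in `D`. -/
def RayleighSet (n : ℕ) (D : Set (EuclideanSpace ℝ (Fin n))) : Set ℝ :=
  {r | ∃ u : EuclideanSpace ℝ (Fin n) → ℝ, ContDiff ℝ (⊤ : ℕ∞) u ∧ HasCompactSupport u ∧
    tsupport u ⊆ D ∧ (∫ x, (u x) ^ 2) ≠ 0 ∧
    r = (∫ x, ‖gradient u x‖ ^ 2) / (∫ x, (u x) ^ 2)}

/-- The first Dirichlet eigenvalue `λ₁(D)` of `-Δ` on `D` (variational characterization). -/
def lam1 (n : ℕ) (D : Set (EuclideanSpace ℝ (Fin n))) : ℝ := sInf (RayleighSet n D)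

/-!
A compactly supported function `g` on the line satisfies `|g| ≤ ½ ∫ |dg/dt|`. Applying this along
the two coordinate lines through each point of the plane and multiplying the two bounds, Fubini
gives `∫ w² ≤ ⅛ (∫ |∇w|)²`. For `w = |u|^q` and by Cauchy–Schwarz this becomes
`∫ |u|^(2q) ≤ (q²/8) ‖∇u‖² ∫ |u|^(2q-2)`, which lowers the exponent by two at the price of a factor
`‖∇u‖²`. After `ν - 1` such steps the exponent lies in `[2, 4]`, where one interpolates between `L²`
and `L⁴`; hence `∫ |u|^p ≤ C ‖∇u‖^(p-2) ‖u‖²`. Finally, since `λ₁ ‖u‖² ≤ ‖∇u‖²`, the Bernoulli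
inequality bounds `(λ₁ + (p/2) τ) ‖∇u‖^(p-2) ‖u‖²` by `(‖∇u‖² + τ ‖u‖²)^(p/2)`. That `λ₁ > 0` on a
set of finite measure follows from the same planar inequality with `w = u`.
-/

lemma integral_rpow_mul_rpow_le {α : Type*} [MeasurableSpace α] {μ : Measure α} {f g : α → ℝ}
    (hf : Integrable f μ) (hg : Integrable g μ) (hf₀ : ∀ x, 0 ≤ f x) (hg₀ : ∀ x, 0 ≤ g x)
    {a b : ℝ} (ha : 0 ≤ a) (hb : 0 ≤ b) (hab : a + b = 1) :
    ∫ x, f x ^ a * g x ^ b ∂μ ≤ (∫ x, f x ∂μ) ^ a * (∫ x, g x ∂μ) ^ b := by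
  have hf_int : ENNReal.ofReal (∫ x, f x ∂μ) = ∫⁻ x, ENNReal.ofReal (f x) ∂μ :=
    ofReal_integral_eq_lintegral_ofReal hf (.of_forall hf₀)
  have hg_int : ENNReal.ofReal (∫ x, g x ∂μ) = ∫⁻ x, ENNReal.ofReal (g x) ∂μ :=
    ofReal_integral_eq_lintegral_ofReal hg (.of_forall hg₀)
  have hF : 0 ≤ ∫ x, f x ∂μ := integral_nonneg hf₀
  have hG : 0 ≤ ∫ x, g x ∂μ := integral_nonneg hg₀
  have hfg₀ (x : α) : 0 ≤ f x ^ a * g x ^ b :=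
    mul_nonneg (Real.rpow_nonneg (hf₀ x) a) (Real.rpow_nonneg (hg₀ x) b)
  have hfg (x : α) : ENNReal.ofReal (f x ^ a * g x ^ b) =
      ENNReal.ofReal (f x) ^ a * ENNReal.ofReal (g x) ^ b := by
    rw [ENNReal.ofReal_mul (Real.rpow_nonneg (hf₀ x) a),
      ENNReal.ofReal_rpow_of_nonneg (hf₀ x) ha, ENNReal.ofReal_rpow_of_nonneg (hg₀ x) hb]
  rw [integral_eq_lintegral_of_nonneg_ae (.of_forall hfg₀)
    ((hf.aemeasurable.pow_const a).mul (hg.aemeasurable.pow_const b)).aestronglyMeasurable]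
  refine ENNReal.toReal_le_of_le_ofReal (by positivity) ?_
  calc ∫⁻ x, ENNReal.ofReal (f x ^ a * g x ^ b) ∂μ
      = ∫⁻ x, ENNReal.ofReal (f x) ^ a * ENNReal.ofReal (g x) ^ b ∂μ := lintegral_congr hfg
    _ ≤ (∫⁻ x, ENNReal.ofReal (f x) ∂μ) ^ a * (∫⁻ x, ENNReal.ofReal (g x) ∂μ) ^ b :=
        ENNReal.lintegral_mul_norm_pow_le hf.aemeasurable.ennreal_ofReal
          hg.aemeasurable.ennreal_ofReal ha hb hab
    _ = ENNReal.ofReal ((∫ x, f x ∂μ) ^ a * (∫ x, g x ∂μ) ^ b) := by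
        rw [ENNReal.ofReal_mul (by positivity), ← ENNReal.ofReal_rpow_of_nonneg hF ha,
          ← ENNReal.ofReal_rpow_of_nonneg hG hb, hf_int, hg_int]

lemma sq_integral_mul_le {α : Type*} [MeasurableSpace α] {μ : Measure α} {f g : α → ℝ}
    (hf : Integrable (fun x => f x ^ 2) μ) (hg : Integrable (fun x => g x ^ 2) μ)
    (hf₀ : ∀ x, 0 ≤ f x) (hg₀ : ∀ x, 0 ≤ g x) :
    (∫ x, f x * g x ∂μ) ^ 2 ≤ (∫ x, f x ^ 2 ∂μ) * ∫ x, g x ^ 2 ∂μ := by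
  have h := integral_rpow_mul_rpow_le hf hg (fun _ => sq_nonneg _) (fun _ => sq_nonneg _)
    (a := 1 / 2) (b := 1 / 2) (by norm_num) (by norm_num) (by norm_num)
  simp only [← Real.sqrt_eq_rpow, Real.sqrt_sq (hf₀ _), Real.sqrt_sq (hg₀ _)] at h
  rw [← Real.sqrt_mul (integral_nonneg fun _ => sq_nonneg _)] at h
  exact (Real.le_sqrt (integral_nonneg fun x => mul_nonneg (hf₀ x) (hg₀ x))
    (mul_nonneg (integral_nonneg fun _ => sq_nonneg _) (integral_nonneg fun _ => sq_nonneg _))).mp h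

lemma rpow_sub_one_mul_add_le_add_rpow {a s q : ℝ} (ha : 0 ≤ a) (has : 0 ≤ a + s) (hq : 1 ≤ q) :
    a ^ (q - 1) * (a + q * s) ≤ (a + s) ^ q := by
  rcases ha.eq_or_lt with rfl | ha
  · rcases hq.eq_or_lt with rfl | hq
    · simp
    · rw [Real.zero_rpow (sub_pos.mpr hq).ne', zero_mul]
      exact Real.rpow_nonneg has q
  have hs : -1 ≤ s / a := by
    rw [le_div_iff₀ ha]; linarith
  calc a ^ (q - 1) * (a + q * s) = a ^ q * (1 + q * (s / a)) := by
        rw [Real.rpow_sub_one ha.ne']; field_simp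
    _ ≤ a ^ q * (1 + s / a) ^ q := by
        gcongr; exact one_add_mul_self_le_rpow_one_add hs hq
    _ = (a + s) ^ q := by
        rw [← Real.mul_rpow ha.le (by linarith), mul_add, mul_one, mul_div_cancel₀ _ ha.ne']

lemma add_mul_nonneg_of_mul_le {a b l q t : ℝ} (ha : 0 ≤ a) (hb : 0 ≤ b) (hq : 1 ≤ q)
    (hlb : l * b ≤ a) (hlt : 0 ≤ l + q * t) : 0 ≤ a + t * b := by
  have : 0 ≤ q * (a + t * b) := by
    linarith [mul_nonneg hlt hb, mul_nonneg (sub_nonneg.mpr hq) ha]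
  exact nonneg_of_mul_nonneg_right this (by linarith)

lemma rpow_sub_one_mul_mul_le_add_mul_rpow {a b l q t : ℝ} (ha : 0 ≤ a) (hb : 0 ≤ b) (hq : 1 ≤ q)
    (hlb : l * b ≤ a) (hlt : 0 ≤ l + q * t) :
    a ^ (q - 1) * b * (l + q * t) ≤ (a + t * b) ^ q := by
  calc a ^ (q - 1) * b * (l + q * t) = a ^ (q - 1) * (l * b + q * (t * b)) := by ring
    _ ≤ a ^ (q - 1) * (a + q * (t * b)) := by gcongr
    _ ≤ (a + t * b) ^ q := rpow_sub_one_mul_add_le_add_rpow ha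
        (add_mul_nonneg_of_mul_le ha hb hq hlb hlt) hq

section

variable {F : Type*} [NormedAddCommGroup F] [NormedSpace ℝ F] [CompleteSpace F]

lemma norm_le_half_integral_norm_deriv {g : ℝ → F} (hg : ContDiff ℝ 1 g)
    (hs : HasCompactSupport g) (x : ℝ) : ‖g x‖ ≤ 1 / 2 * ∫ t, ‖deriv g t‖ := by
  have hint : Integrable (fun t => ‖deriv g t‖) :=
    ((hg.continuous_deriv le_rfl).integrable_of_hasCompactSupport hs.deriv).norm
  have hleft : ‖g x‖ ≤ ∫ t in Set.Iic x, ‖deriv g t‖ := by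
    rw [← hs.integral_Iic_deriv_eq hg x]
    exact norm_integral_le_integral_norm _
  have hright : ‖g x‖ ≤ ∫ t in Set.Ioi x, ‖deriv g t‖ := by
    rw [← norm_neg, ← hs.integral_Ioi_deriv_eq hg x]
    exact norm_integral_le_integral_norm _
  have hsplit := intervalIntegral.integral_Iic_add_Ioi (b := x) hint.integrableOn hint.integrableOn
  linarith

lemma norm_le_half_integral_norm_fderiv_line {E : Type*} [NormedAddCommGroup E] [NormedSpace ℝ E]
    {f : E → F} (hf : ContDiff ℝ 1 f) (hs : HasCompactSupport f) (x : E) {v : E} (hv : v ≠ 0)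
    (s : ℝ) : ‖f (x + s • v)‖ ≤ 1 / 2 * ∫ t : ℝ, ‖fderiv ℝ f (x + t • v) v‖ := by
  have hsupp : HasCompactSupport fun t : ℝ => f (x + t • v) :=
    hs.comp_isClosedEmbedding
      ((Homeomorph.addLeft x).isClosedEmbedding.comp (isClosedEmbedding_smul_left hv))
  have hline (t : ℝ) : HasDerivAt (fun t : ℝ => x + t • v) v t := by
    simpa using ((hasDerivAt_id t).smul_const v).const_add x
  have hderiv (t : ℝ) : deriv (fun t : ℝ => f (x + t • v)) t = fderiv ℝ f (x + t • v) v :=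
    ((hf.differentiable one_ne_zero _).hasFDerivAt.comp_hasDerivAt t (hline t)).deriv
  have hg : ContDiff ℝ 1 fun t : ℝ => f (x + t • v) := by fun_prop
  simpa only [hderiv] using norm_le_half_integral_norm_deriv hg hsupp s

lemma integral_norm_sq_le_mul_integral_norm_fderiv {f : ℝ × ℝ → F} (hf : ContDiff ℝ 1 f)
    (hs : HasCompactSupport f) :
    ∫ z, ‖f z‖ ^ 2 ≤
      (1 / 2 * ∫ z, ‖fderiv ℝ f z (1, 0)‖) * (1 / 2 * ∫ z, ‖fderiv ℝ f z (0, 1)‖) := by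
  have hint (v : ℝ × ℝ) : Integrable fun z => ‖fderiv ℝ f z v‖ :=
    ((hf.continuous_fderiv one_ne_zero).clm_apply continuous_const
      |>.integrable_of_hasCompactSupport (hs.fderiv_apply ℝ v)).norm
  have hfst (z : ℝ × ℝ) : ‖f z‖ ≤ 1 / 2 * ∫ t, ‖fderiv ℝ f (t, z.2) (1, 0)‖ := by
    simpa using norm_le_half_integral_norm_fderiv_line hf hs (0, z.2) (v := (1, 0)) (by simp) z.1
  have hsnd (z : ℝ × ℝ) : ‖f z‖ ≤ 1 / 2 * ∫ t, ‖fderiv ℝ f (z.1, t) (0, 1)‖ := by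
    simpa using norm_le_half_integral_norm_fderiv_line hf hs (z.1, 0) (v := (0, 1)) (by simp) z.2
  calc ∫ z, ‖f z‖ ^ 2
      ≤ ∫ z : ℝ × ℝ, (1 / 2 * ∫ t, ‖fderiv ℝ f (z.1, t) (0, 1)‖) *
          (1 / 2 * ∫ t, ‖fderiv ℝ f (t, z.2) (1, 0)‖) := by
        refine integral_mono_of_nonneg (.of_forall fun z => sq_nonneg _)
          (((hint _).integral_prod_left.const_mul _).mul_prod
            ((hint _).integral_prod_right.const_mul _)) (.of_forall fun z => ?_)
        simp only [sq]
        exact mul_le_mul (hsnd z) (hfst z) (norm_nonneg _) (by positivity)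
    _ = (1 / 2 * ∫ x, ∫ t, ‖fderiv ℝ f (x, t) (0, 1)‖) *
          (1 / 2 * ∫ y, ∫ t, ‖fderiv ℝ f (t, y) (1, 0)‖) := by
        rw [← integral_const_mul, ← integral_const_mul]
        exact integral_prod_mul (fun x => 1 / 2 * ∫ t, ‖fderiv ℝ f (x, t) (0, 1)‖)
          (fun y => 1 / 2 * ∫ t, ‖fderiv ℝ f (t, y) (1, 0)‖)
    _ = (1 / 2 * ∫ z, ‖fderiv ℝ f z (1, 0)‖) * (1 / 2 * ∫ z, ‖fderiv ℝ f z (0, 1)‖) := by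
        rw [mul_comm, Measure.volume_eq_prod, integral_prod_symm _ (hint (1, 0)),
          integral_prod _ (hint (0, 1))]

end

local notation "ℝ²" => EuclideanSpace ℝ (Fin 2)

/-- Cartesian coordinates, used to apply Fubini on the Euclidean plane. The domain `ℝ × ℝ` carries
the sup norm, so this is only a continuous linear equivalence, not an isometry. -/
def prodEquivPlane : (ℝ × ℝ) ≃L[ℝ] ℝ² :=
  (ContinuousLinearEquiv.finTwoArrow ℝ ℝ).symm.trans
    (PiLp.continuousLinearEquiv 2 ℝ fun _ : Fin 2 => ℝ).symm

lemma measurePreserving_prodEquivPlane : MeasurePreserving prodEquivPlane :=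
  (PiLp.volume_preserving_toLp (Fin 2)).comp (volume_preserving_finTwoArrow ℝ).symm

lemma integral_comp_prodEquivPlane (f : ℝ² → ℝ) : ∫ z, f (prodEquivPlane z) = ∫ x, f x :=
  measurePreserving_prodEquivPlane.integral_comp
    prodEquivPlane.toHomeomorph.measurableEmbedding f

lemma prodEquivPlane_one_zero : prodEquivPlane (1, 0) = EuclideanSpace.basisFun (Fin 2) ℝ 0 := by
  ext i; fin_cases i <;> simp [prodEquivPlane]

lemma prodEquivPlane_zero_one : prodEquivPlane (0, 1) = EuclideanSpace.basisFun (Fin 2) ℝ 1 := by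
  ext i; fin_cases i <;> simp [prodEquivPlane]

lemma abs_basis_add_abs_basis_le_sqrt_two_mul_norm {E : Type*} [NormedAddCommGroup E]
    [InnerProductSpace ℝ E] (b : OrthonormalBasis (Fin 2) ℝ E) (L : StrongDual ℝ E) :
    |L (b 0)| + |L (b 1)| ≤ √2 * ‖L‖ := by
  refine le_of_sq_le_sq ?_ (by positivity)
  rw [mul_pow, Real.sq_sqrt zero_le_two, b.norm_dual, Fin.sum_univ_two, ← sq_abs (L (b 0)),
    ← sq_abs (L (b 1))]
  exact add_sq_le

lemma integral_sq_le_sq_integral_norm_fderiv {w : ℝ² → ℝ} (hw : ContDiff ℝ 1 w)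
    (hs : HasCompactSupport w) :
    ∫ x, w x ^ 2 ≤ 1 / 8 * (∫ x, ‖fderiv ℝ w x‖) ^ 2 := by
  set e := EuclideanSpace.basisFun (Fin 2) ℝ
  have hD := hw.continuous_fderiv one_ne_zero
  have hint (i : Fin 2) : Integrable fun x => |fderiv ℝ w x (e i)| :=
    ((hD.clm_apply continuous_const).integrable_of_hasCompactSupport (hs.fderiv_apply ℝ (e i))).abs
  set I : Fin 2 → ℝ := fun i => ∫ x, |fderiv ℝ w x (e i)|
  have hproduct : ∫ x, w x ^ 2 ≤ (1 / 2 * I 0) * (1 / 2 * I 1) := by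
    have h := integral_norm_sq_le_mul_integral_norm_fderiv (f := w ∘ prodEquivPlane)
      (hw.comp prodEquivPlane.contDiff)
      (hs.comp_isClosedEmbedding prodEquivPlane.toHomeomorph.isClosedEmbedding)
    simp only [prodEquivPlane.comp_right_fderiv, Function.comp_apply,
      ContinuousLinearMap.comp_apply, ContinuousLinearEquiv.coe_coe, prodEquivPlane_one_zero,
      prodEquivPlane_zero_one, Real.norm_eq_abs, sq_abs] at h
    rwa [integral_comp_prodEquivPlane fun x => w x ^ 2,
      integral_comp_prodEquivPlane fun x => |fderiv ℝ w x (e 0)|,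
      integral_comp_prodEquivPlane fun x => |fderiv ℝ w x (e 1)|] at h
  have hsum : I 0 + I 1 ≤ √2 * ∫ x, ‖fderiv ℝ w x‖ := by
    rw [← integral_add (hint 0) (hint 1), ← integral_const_mul]
    exact integral_mono ((hint 0).add (hint 1))
      ((hD.integrable_of_hasCompactSupport (hs.fderiv ℝ)).norm.const_mul _)
      fun x => abs_basis_add_abs_basis_le_sqrt_two_mul_norm e (fderiv ℝ w x)
  have hI (i : Fin 2) : 0 ≤ I i := integral_nonneg fun _ => abs_nonneg _
  calc ∫ x, w x ^ 2 ≤ (1 / 2 * I 0) * (1 / 2 * I 1) := hproduct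
    _ ≤ 1 / 16 * (I 0 + I 1) ^ 2 := by linarith [four_mul_le_sq_add (I 0) (I 1)]
    _ ≤ 1 / 16 * (√2 * ∫ x, ‖fderiv ℝ w x‖) ^ 2 := by
        have := add_nonneg (hI 0) (hI 1)
        gcongr
    _ = 1 / 8 * (∫ x, ‖fderiv ℝ w x‖) ^ 2 := by
        rw [mul_pow, Real.sq_sqrt zero_le_two]; ring

lemma integrable_norm_rpow {X F : Type*} [TopologicalSpace X] [MeasurableSpace X]
    [OpensMeasurableSpace X] {μ : Measure X} [IsFiniteMeasureOnCompacts μ] [NormedAddCommGroup F]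
    {u : X → F} (hu : Continuous u) (hs : HasCompactSupport u) {q : ℝ} (hq : 0 < q) :
    Integrable (fun x => ‖u x‖ ^ q) μ :=
  (hu.norm.rpow_const fun _ => .inr hq.le).integrable_of_hasCompactSupport
    (hs.comp_left (g := fun y => ‖y‖ ^ q) (by simp [hq.ne']))

lemma integrable_norm_fderiv_sq {E F : Type*} [NormedAddCommGroup E] [NormedSpace ℝ E]
    [MeasurableSpace E] [OpensMeasurableSpace E] {μ : Measure E} [IsFiniteMeasureOnCompacts μ]
    [NormedAddCommGroup F] [NormedSpace ℝ F] {u : E → F} (hu : ContDiff ℝ 1 u)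
    (hs : HasCompactSupport u) : Integrable (fun x => ‖fderiv ℝ u x‖ ^ 2) μ := by
  simpa using integrable_norm_rpow (hu.continuous_fderiv one_ne_zero) (hs.fderiv ℝ) zero_lt_two

lemma integral_sq_le_volume_mul_integral_norm_fderiv_sq {Ω : Set ℝ²} (hΩ : volume Ω ≠ ⊤)
    {u : ℝ² → ℝ} (hu : ContDiff ℝ 1 u) (hs : HasCompactSupport u) (hsub : tsupport u ⊆ Ω) :
    ∫ x, u x ^ 2 ≤ volume.real Ω / 8 * ∫ x, ‖fderiv ℝ u x‖ ^ 2 := by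
  have hfin : IsFiniteMeasure (volume.restrict Ω) := isFiniteMeasure_restrict.mpr hΩ
  have hD (x : ℝ²) (hx : x ∉ Ω) : fderiv ℝ u x = 0 :=
    fderiv_of_notMem_tsupport ℝ fun h => hx (hsub h)
  have hD₁ : ∫ x in Ω, ‖fderiv ℝ u x‖ = ∫ x, ‖fderiv ℝ u x‖ :=
    setIntegral_eq_integral_of_forall_compl_eq_zero fun x hx => by simp [hD x hx]
  have hD₂ : ∫ x in Ω, ‖fderiv ℝ u x‖ ^ 2 = ∫ x, ‖fderiv ℝ u x‖ ^ 2 :=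
    setIntegral_eq_integral_of_forall_compl_eq_zero fun x hx => by simp [hD x hx]
  have hCS : (∫ x, ‖fderiv ℝ u x‖) ^ 2 ≤ volume.real Ω * ∫ x, ‖fderiv ℝ u x‖ ^ 2 := by
    simpa [hD₁, hD₂] using sq_integral_mul_le (μ := volume.restrict Ω) (integrable_const (1 ^ 2))
      (integrable_norm_fderiv_sq hu hs) (fun _ => zero_le_one) fun _ => norm_nonneg _
  linarith [integral_sq_le_sq_integral_norm_fderiv hu hs]

section

variable {F : Type*} [NormedAddCommGroup F] [InnerProductSpace ℝ F] {u : ℝ² → F}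

lemma integral_norm_rpow_two_mul_le (hu : ContDiff ℝ 1 u) (hs : HasCompactSupport u) {q : ℝ}
    (hq : 1 < q) :
    ∫ x, ‖u x‖ ^ (2 * q) ≤
      q ^ 2 / 8 * (∫ x, ‖fderiv ℝ u x‖ ^ 2) * ∫ x, ‖u x‖ ^ (2 * q - 2) := by
  have hsq (r : ℝ) (x : ℝ²) : (‖u x‖ ^ r) ^ 2 = ‖u x‖ ^ (2 * r) := by
    rw [mul_comm, Real.rpow_mul (norm_nonneg _), Real.rpow_two]
  have hw : ContDiff ℝ 1 fun x => ‖u x‖ ^ q := hu.norm_rpow hq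
  have hws : HasCompactSupport fun x => ‖u x‖ ^ q :=
    hs.comp_left (g := fun y => ‖y‖ ^ q) (by simp [(one_pos.trans hq).ne'])
  have hU : Integrable fun x => (‖u x‖ ^ (q - 1)) ^ 2 := by
    simpa only [hsq] using integrable_norm_rpow hu.continuous hs (by linarith : 0 < 2 * (q - 1))
  have hgrad : ∫ x, ‖fderiv ℝ (fun x => ‖u x‖ ^ q) x‖ ≤
      q * ∫ x, ‖u x‖ ^ (q - 1) * ‖fderiv ℝ u x‖ := by
    rw [← integral_const_mul]
    refine integral_mono ((hw.continuous_fderiv one_ne_zero).integrable_of_hasCompactSupport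
      (hws.fderiv ℝ)).norm ?_ fun x => ?_
    · exact ((hu.continuous.norm.rpow_const fun _ => .inr (sub_nonneg.mpr hq.le)).mul
        (hu.continuous_fderiv one_ne_zero).norm).integrable_of_hasCompactSupport
          (hs.fderiv ℝ).norm.mul_left |>.const_mul q
    · simpa only [mul_assoc] using norm_fderiv_norm_rpow_le (hu.differentiable one_ne_zero) hq
  calc ∫ x, ‖u x‖ ^ (2 * q) = ∫ x, (‖u x‖ ^ q) ^ 2 := by simp only [hsq]
    _ ≤ 1 / 8 * (∫ x, ‖fderiv ℝ (fun x => ‖u x‖ ^ q) x‖) ^ 2 :=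
        integral_sq_le_sq_integral_norm_fderiv hw hws
    _ ≤ 1 / 8 * (q * ∫ x, ‖u x‖ ^ (q - 1) * ‖fderiv ℝ u x‖) ^ 2 := by gcongr
    _ = q ^ 2 / 8 * (∫ x, ‖u x‖ ^ (q - 1) * ‖fderiv ℝ u x‖) ^ 2 := by ring
    _ ≤ q ^ 2 / 8 * ((∫ x, (‖u x‖ ^ (q - 1)) ^ 2) * ∫ x, ‖fderiv ℝ u x‖ ^ 2) := by
        gcongr
        exact sq_integral_mul_le hU (integrable_norm_fderiv_sq hu hs) (fun _ => by positivity)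
          fun _ => norm_nonneg _
    _ = q ^ 2 / 8 * (∫ x, ‖fderiv ℝ u x‖ ^ 2) * ∫ x, ‖u x‖ ^ (2 * q - 2) := by
        simp only [hsq, mul_sub, mul_one]; ring

lemma integral_norm_rpow_le_prod_mul (hu : ContDiff ℝ 1 u) (hs : HasCompactSupport u) {q : ℝ}
    (n : ℕ) (hq : n < q) :
    ∫ x, ‖u x‖ ^ (2 * q) ≤ (1 / 8) ^ n * (∏ i ∈ Finset.range n, (q - i)) ^ 2 *
      (∫ x, ‖fderiv ℝ u x‖ ^ 2) ^ n * ∫ x, ‖u x‖ ^ (2 * (q - n)) := by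
  induction n with
  | zero => simp
  | succ n ih =>
    push_cast at hq
    have hstep := integral_norm_rpow_two_mul_le hu hs (q := q - n) (by linarith)
    calc ∫ x, ‖u x‖ ^ (2 * q)
        ≤ (1 / 8) ^ n * (∏ i ∈ Finset.range n, (q - i)) ^ 2 *
            (∫ x, ‖fderiv ℝ u x‖ ^ 2) ^ n * ∫ x, ‖u x‖ ^ (2 * (q - n)) := ih (by linarith)
      _ ≤ (1 / 8) ^ n * (∏ i ∈ Finset.range n, (q - i)) ^ 2 * (∫ x, ‖fderiv ℝ u x‖ ^ 2) ^ n *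
            ((q - n) ^ 2 / 8 * (∫ x, ‖fderiv ℝ u x‖ ^ 2) * ∫ x, ‖u x‖ ^ (2 * (q - n) - 2)) := by
          gcongr
      _ = (1 / 8) ^ (n + 1) * (∏ i ∈ Finset.range (n + 1), (q - i)) ^ 2 *
            (∫ x, ‖fderiv ℝ u x‖ ^ 2) ^ (n + 1) * ∫ x, ‖u x‖ ^ (2 * (q - (n + 1 : ℕ))) := by
          rw [Finset.prod_range_succ, show 2 * (q - n) - 2 = 2 * (q - (n + 1 : ℕ)) by
            push_cast; ring]
          ring

lemma integral_norm_rpow_le_of_mem_Icc (hu : ContDiff ℝ 1 u) (hs : HasCompactSupport u) {r : ℝ}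
    (hr : r ∈ Set.Icc 1 2) :
    ∫ x, ‖u x‖ ^ (2 * r) ≤
      (∫ x, ‖u x‖ ^ 2) * (1 / 2 * ∫ x, ‖fderiv ℝ u x‖ ^ 2) ^ (r - 1) := by
  have h₂ : Integrable fun x => ‖u x‖ ^ (2 : ℝ) := integrable_norm_rpow hu.continuous hs two_pos
  have h₄ : Integrable fun x => ‖u x‖ ^ (4 : ℝ) := integrable_norm_rpow hu.continuous hs four_pos
  set A := ∫ x, ‖fderiv ℝ u x‖ ^ 2
  set B := ∫ x, ‖u x‖ ^ 2
  have hB : 0 ≤ B := integral_nonneg fun _ => sq_nonneg _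
  have hladyzhenskaya : ∫ x, ‖u x‖ ^ (4 : ℝ) ≤ B * (1 / 2 * A) := by
    have h := integral_norm_rpow_two_mul_le hu hs one_lt_two
    norm_num only [Real.rpow_two] at h
    linarith
  have hpow (x : ℝ²) : (‖u x‖ ^ (2 : ℝ)) ^ (2 - r) * (‖u x‖ ^ (4 : ℝ)) ^ (r - 1) =
      ‖u x‖ ^ (2 * r) := by
    rw [← Real.rpow_mul (norm_nonneg _), ← Real.rpow_mul (norm_nonneg _),
      ← Real.rpow_add' (norm_nonneg _) (by linarith [hr.1])]
    ring_nf
  calc ∫ x, ‖u x‖ ^ (2 * r)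
      = ∫ x, (‖u x‖ ^ (2 : ℝ)) ^ (2 - r) * (‖u x‖ ^ (4 : ℝ)) ^ (r - 1) := by simp only [hpow]
    _ ≤ (∫ x, ‖u x‖ ^ (2 : ℝ)) ^ (2 - r) * (∫ x, ‖u x‖ ^ (4 : ℝ)) ^ (r - 1) :=
        integral_rpow_mul_rpow_le h₂ h₄ (fun _ => by positivity) (fun _ => by positivity)
          (by linarith [hr.2]) (by linarith [hr.1]) (by ring)
    _ ≤ B ^ (2 - r) * (B * (1 / 2 * A)) ^ (r - 1) := by
        have := sub_nonneg.mpr hr.1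
        simp only [Real.rpow_two]
        gcongr
    _ = B * (1 / 2 * A) ^ (r - 1) := by
        rw [Real.mul_rpow hB (by positivity), ← mul_assoc, ← Real.rpow_add' hB (by norm_num)]
        norm_num

lemma integral_norm_rpow_le_mul_integral_norm_fderiv_sq_rpow (hu : ContDiff ℝ 1 u)
    (hs : HasCompactSupport u) {q : ℝ} {ν : ℕ} (hν : 1 ≤ ν) (hνq : ν ≤ q) (hqν : q ≤ ν + 1) :
    ∫ x, ‖u x‖ ^ (2 * q) ≤ (1 / 2) ^ (q + (2 * ν - 3)) *
      (∏ i ∈ Finset.range (ν - 1), (q - i)) ^ 2 *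
      ((∫ x, ‖fderiv ℝ u x‖ ^ 2) ^ (q - 1) * ∫ x, ‖u x‖ ^ 2) := by
  obtain ⟨n, rfl⟩ := Nat.exists_eq_add_of_le' hν
  push_cast at hνq hqν ⊢
  set A := ∫ x, ‖fderiv ℝ u x‖ ^ 2
  set B := ∫ x, ‖u x‖ ^ 2
  have hA : 0 ≤ A := integral_nonneg fun _ => sq_nonneg _
  have hApow : A ^ (q - 1) = A ^ n * A ^ (q - n - 1) := by
    rw [← Real.rpow_natCast, ← Real.rpow_add_of_nonneg hA n.cast_nonneg (by linarith)]
    ring_nf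
  have hconst : (1 / 2 : ℝ) ^ (q + (2 * (n + 1) - 3)) = (1 / 8) ^ n * (1 / 2) ^ (q - n - 1) := by
    rw [show (1 / 8 : ℝ) = (1 / 2) ^ (3 : ℝ) by norm_num, ← Real.rpow_mul_natCast (by norm_num),
      ← Real.rpow_add (by norm_num)]
    ring_nf
  calc ∫ x, ‖u x‖ ^ (2 * q)
      ≤ (1 / 8) ^ n * (∏ i ∈ Finset.range n, (q - i)) ^ 2 * A ^ n *
          ∫ x, ‖u x‖ ^ (2 * (q - n)) := integral_norm_rpow_le_prod_mul hu hs n (by linarith)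
    _ ≤ (1 / 8) ^ n * (∏ i ∈ Finset.range n, (q - i)) ^ 2 * A ^ n *
          (B * (1 / 2 * A) ^ (q - n - 1)) := by
        gcongr
        exact integral_norm_rpow_le_of_mem_Icc hu hs ⟨by linarith, by linarith⟩
    _ = (1 / 2) ^ (q + (2 * (n + 1) - 3)) * (∏ i ∈ Finset.range n, (q - i)) ^ 2 *
          (A ^ (q - 1) * B) := by
        rw [Real.mul_rpow (by norm_num) hA, hApow, hconst]
        ring

lemma integral_norm_rpow_rpow_one_div_le_mul_sqrt (hu : ContDiff ℝ 1 u)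
    (hs : HasCompactSupport u) {p l t : ℝ} {ν : ℕ} (hν : 1 ≤ ν) (hνp : ν ≤ p / 2)
    (hpν : p / 2 ≤ ν + 1) (hl : l * ∫ x, ‖u x‖ ^ 2 ≤ ∫ x, ‖fderiv ℝ u x‖ ^ 2)
    (hlt : 0 < l + p / 2 * t) :
    (∫ x, ‖u x‖ ^ p) ^ (1 / p) ≤
      (1 / 2) ^ (1 / 2 + (2 * ν - 3) / p) *
        (∏ i ∈ Finset.range (ν - 1), (p / 2 - i)) ^ (2 / p) * (l + p / 2 * t) ^ (-1 / p) *
        √((∫ x, ‖fderiv ℝ u x‖ ^ 2) + t * ∫ x, ‖u x‖ ^ 2) := by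
  have hq : 1 ≤ p / 2 := le_trans (by exact_mod_cast hν) hνp
  have hp : 0 < p := by linarith
  have hmoment := integral_norm_rpow_le_mul_integral_norm_fderiv_sq_rpow hu hs hν hνp hpν
  rw [mul_div_cancel₀ p two_ne_zero] at hmoment
  set A := ∫ x, ‖fderiv ℝ u x‖ ^ 2
  set B := ∫ x, ‖u x‖ ^ 2
  set L := l + p / 2 * t
  set P := ∏ i ∈ Finset.range (ν - 1), (p / 2 - (i : ℝ))
  have hA : 0 ≤ A := integral_nonneg fun _ => sq_nonneg _
  have hB : 0 ≤ B := integral_nonneg fun _ => sq_nonneg _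
  have hP : 0 ≤ P := Finset.prod_nonneg fun i hi => by
    have : (i : ℝ) < ν := by exact_mod_cast (Finset.mem_range.mp hi).trans_le (Nat.sub_le ν 1)
    linarith
  have hsum : 0 ≤ A + t * B := add_mul_nonneg_of_mul_le hA hB hq hl hlt.le
  have hAB : A ^ (p / 2 - 1) * B ≤ (A + t * B) ^ (p / 2) * L⁻¹ :=
    (le_mul_inv_iff₀ hlt).mpr (rpow_sub_one_mul_mul_le_add_mul_rpow hA hB hq hl hlt.le)
  calc (∫ x, ‖u x‖ ^ p) ^ (1 / p)
      ≤ ((1 / 2) ^ (p / 2 + (2 * ν - 3)) * P ^ 2 * ((A + t * B) ^ (p / 2) * L⁻¹)) ^ (1 / p) := by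
        gcongr
        exact hmoment.trans (by gcongr)
    _ = ((1 / 2) ^ (p / 2 + (2 * ν - 3))) ^ (1 / p) * (P ^ (2 : ℝ)) ^ (1 / p) *
          (((A + t * B) ^ (p / 2)) ^ (1 / p) * (L ^ (-1 : ℝ)) ^ (1 / p)) := by
        rw [Real.mul_rpow (by positivity) (by positivity),
          Real.mul_rpow (by positivity) (by positivity),
          Real.mul_rpow (by positivity) (by positivity), Real.rpow_two, Real.rpow_neg_one]
    _ = (1 / 2) ^ (1 / 2 + (2 * ν - 3) / p) * P ^ (2 / p) *
          ((A + t * B) ^ (1 / 2 : ℝ) * L ^ (-1 / p)) := by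
        simp only [← Real.rpow_mul hP, ← Real.rpow_mul hsum, ← Real.rpow_mul hlt.le,
          ← Real.rpow_mul one_half_pos.le, mul_one_div]
        rw [add_div, div_right_comm, div_self hp.ne']
    _ = (1 / 2) ^ (1 / 2 + (2 * ν - 3) / p) * P ^ (2 / p) * L ^ (-1 / p) * √(A + t * B) := by
        rw [← Real.sqrt_eq_rpow]; ring

end

lemma norm_gradient {E : Type*} [NormedAddCommGroup E] [InnerProductSpace ℝ E] [CompleteSpace E]
    (u : E → ℝ) (x : E) : ‖gradient u x‖ = ‖fderiv ℝ u x‖ := by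
  rw [← toDual_gradient, LinearIsometryEquiv.norm_map]

lemma nonneg_of_mem_rayleighSet {n : ℕ} {D : Set (EuclideanSpace ℝ (Fin n))} {r : ℝ}
    (hr : r ∈ RayleighSet n D) : 0 ≤ r := by
  obtain ⟨u, -, -, -, -, rfl⟩ := hr
  exact div_nonneg (integral_nonneg fun _ => sq_nonneg _) (integral_nonneg fun _ => sq_nonneg _)

lemma rayleighSet_nonempty {n : ℕ} {D : Set (EuclideanSpace ℝ (Fin n))}
    (hD : (interior D).Nonempty) : (RayleighSet n D).Nonempty := by
  obtain ⟨x, hx⟩ := hD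
  obtain ⟨u, hsub, hs, hu, -, hux⟩ :=
    exists_contDiff_tsupport_subset (n := ⊤) (mem_interior_iff_mem_nhds.mp hx)
  have hpos : 0 < ∫ y, u y ^ 2 :=
    (hu.continuous.pow 2).integral_pos_of_hasCompactSupport_nonneg_nonzero
      (hs.comp_left (g := fun y => y ^ 2) (by simp)) (fun _ => sq_nonneg _) (x := x) (by simp [hux])
  exact ⟨_, u, hu, hs, hsub, hpos.ne', rfl⟩

lemma lam1_mul_integral_sq_le {n : ℕ} {D : Set (EuclideanSpace ℝ (Fin n))}
    {u : EuclideanSpace ℝ (Fin n) → ℝ} (hu : ContDiff ℝ (⊤ : ℕ∞) u) (hs : HasCompactSupport u)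
    (hsub : tsupport u ⊆ D) :
    lam1 n D * ∫ x, u x ^ 2 ≤ ∫ x, ‖gradient u x‖ ^ 2 := by
  have hB : 0 ≤ ∫ x, u x ^ 2 := integral_nonneg fun _ => sq_nonneg _
  rcases hB.eq_or_lt with hB | hB
  · rw [← hB, mul_zero]
    exact integral_nonneg fun _ => sq_nonneg _
  · rw [← le_div_iff₀ hB]
    exact csInf_le ⟨0, fun _ => nonneg_of_mem_rayleighSet⟩ ⟨u, hu, hs, hsub, hB.ne', rfl⟩

lemma eight_div_volume_le_lam1 {Ω : Set ℝ²} (hΩ : (interior Ω).Nonempty) (hfin : volume Ω ≠ ⊤) :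
    8 / volume.real Ω ≤ lam1 2 Ω := by
  have hvol : 0 < volume.real Ω :=
    ENNReal.toReal_pos (Measure.measure_pos_of_nonempty_interior _ hΩ).ne' hfin
  refine le_csInf (rayleighSet_nonempty hΩ) ?_
  rintro _ ⟨u, hu, hs, hsub, hB, rfl⟩
  have hBpos : 0 < ∫ x, u x ^ 2 := (integral_nonneg fun _ => sq_nonneg _).lt_of_ne' hB
  have hpoincare := integral_sq_le_volume_mul_integral_norm_fderiv_sq hfin
    (hu.of_le (by exact_mod_cast le_top)) hs hsub
  simp only [norm_gradient]
  rw [div_le_div_iff₀ hvol hBpos]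
  linarith

lemma lam1_pos {Ω : Set ℝ²} (hΩ : (interior Ω).Nonempty) (hfin : volume Ω ≠ ⊤) :
    0 < lam1 2 Ω :=
  (div_pos (by norm_num) (ENNReal.toReal_pos
    (Measure.measure_pos_of_nonempty_interior _ hΩ).ne' hfin)).trans_le
    (eight_div_volume_le_lam1 hΩ hfin)

theorem stmt14_general (Ω : Set ℝ²) (p : ℝ) (hp : 2 ≤ p) (ν : ℕ) (hν : ν = Nat.floor (p / 2))
    (τ : ℝ) (hτ : 0 < lam1 2 Ω + p / 2 * τ) (u : ℝ² → ℝ)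
    (hu : ContDiff ℝ (⊤ : ℕ∞) u) (hsupp : HasCompactSupport u) (hsub : tsupport u ⊆ Ω) :
    (∫ x in Ω, |u x| ^ p) ^ (1/p) ≤
      ((1:ℝ)/2) ^ ((1:ℝ)/2 + (2 * (ν : ℝ) - 3)/p) *
        (∏ i ∈ Finset.range (ν - 1), (p/2 - (i : ℝ))) ^ (2/p) *
        (lam1 2 Ω + (p/2) * τ) ^ (-(1:ℝ)/p) *
        Real.sqrt ((∫ x in Ω, ‖gradient u x‖ ^ 2) + τ * ∫ x in Ω, (u x) ^ 2) := by
  have hν₁ : 1 ≤ ν := hν ▸ Nat.le_floor (by norm_num; linarith)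
  have hνp : (ν : ℝ) ≤ p / 2 := hν ▸ Nat.floor_le (by linarith)
  have hpν : p / 2 ≤ ν + 1 := hν ▸ (Nat.lt_floor_add_one _).le
  have hu₀ (x : ℝ²) (hx : x ∉ Ω) : u x = 0 :=
    image_eq_zero_of_notMem_tsupport fun h => hx (hsub h)
  have hDu₀ (x : ℝ²) (hx : x ∉ Ω) : fderiv ℝ u x = 0 :=
    fderiv_of_notMem_tsupport ℝ fun h => hx (hsub h)
  have hrayleigh := lam1_mul_integral_sq_le hu hsupp hsub
  simp only [norm_gradient] at hrayleigh ⊢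
  rw [setIntegral_eq_integral_of_forall_compl_eq_zero fun x hx => by
      simp [hu₀ x hx, (two_pos.trans_le hp).ne'],
    setIntegral_eq_integral_of_forall_compl_eq_zero fun x hx => by simp [hDu₀ x hx],
    setIntegral_eq_integral_of_forall_compl_eq_zero fun x hx => by simp [hu₀ x hx]]
  simpa only [Real.norm_eq_abs, sq_abs] using integral_norm_rpow_rpow_one_div_le_mul_sqrt
    (hu.of_le (by exact_mod_cast le_top)) hsupp hν₁ hνp hpν (by simpa using hrayleigh) hτ

/-- **Plum's explicit embedding constant `H₀¹(Ω) ↪ L^p(Ω)` for `n = 2`.**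
Let `Ω ⊂ ℝ²` be a bounded domain with first Dirichlet Laplacian eigenvalue `λ₁`,
`p ∈ [2,∞)`, `ν` the largest integer with `ν ≤ p/2`, and `τ ≥ 0`.  Then for every
`u ∈ H₀¹(Ω)` (represented by smooth functions compactly supported in `Ω`),
`‖u‖_{L^p} ≤ (1/2)^{1/2+(2ν−3)/p} [(p/2)(p/2−1)⋯(p/2−ν+2)]^{2/p} (λ₁+(p/2)τ)^{−1/p} ‖u‖_V`,
with `‖u‖_V² = ‖∇u‖²_{L²} + τ‖u‖²_{L²}` (the bracketed product is `1` when `ν = 1`). -/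
theorem stmt14 (Ω : Set (EuclideanSpace ℝ (Fin 2)))
    (hΩo : IsOpen Ω) (hΩc : IsConnected Ω) (hΩb : Bornology.IsBounded Ω)
    (p : ℝ) (hp : 2 ≤ p) (ν : ℕ) (hν : ν = Nat.floor (p / 2))
    (τ : ℝ) (hτ : 0 ≤ τ)
    (u : EuclideanSpace ℝ (Fin 2) → ℝ)
    (hu : ContDiff ℝ (⊤ : ℕ∞) u) (hsupp : HasCompactSupport u) (hsub : tsupport u ⊆ Ω) :
    (∫ x in Ω, |u x| ^ p) ^ (1/p) ≤
      ((1:ℝ)/2) ^ ((1:ℝ)/2 + (2 * (ν : ℝ) - 3)/p) *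
        (∏ i ∈ Finset.range (ν - 1), (p/2 - (i : ℝ))) ^ (2/p) *
        (lam1 2 Ω + (p/2) * τ) ^ (-(1:ℝ)/p) *
        Real.sqrt ((∫ x in Ω, ‖gradient u x‖ ^ 2) + τ * ∫ x in Ω, (u x) ^ 2) := by
  have hlam := lam1_pos (hΩo.interior_eq.symm ▸ hΩc.nonempty) hΩb.measure_lt_top.ne
  exact stmt14_general Ω p hp ν hν τ (by positivity) u hu hsupp hsub

end
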